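/- arXiv:2210.05796 — 6 statements merged into one kernel-verified Lean document; each statement's English description precedes it below -/
import Mathlib

section
/- For every eccentricity e with 0 ≤ e < 1, the integral of (1 − e·cos u)^(−7) over u from 0 to 2π equals 2π·(1 + (15/2)e² + (45/8)e⁴ + (5/16)e⁶)/(1 − e²)^(13/2). Equivalently, the average over one orbital period of (a/r)⁶ · (df/dt), where df/dt = (a/r)²·√(1 − e²), equals the averaged tidal coefficient N̄(e). -/
open Real

lemma tidal_D_pos (e : ℝ) (h0 : 0 ≤ e) (h1 : e < 1) (u : ℝ) : 0 < 1 - e * Real.cos u := by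
  nlinarith [Real.cos_le_one u]

lemma tidal_int (e : ℝ) (h0 : 0 ≤ e) (h1 : e < 1) (n : ℕ) :
    IntervalIntegrable (fun u => ((1 - e * Real.cos u)⁻¹) ^ n) MeasureTheory.volume 0 (2 * π) := by
  apply Continuous.intervalIntegrable
  exact (Continuous.inv₀ (by fun_prop) (fun u => (tidal_D_pos e h0 h1 u).ne')).pow n

lemma tidal_rec (e : ℝ) (h0 : 0 ≤ e) (h1 : e < 1) (n : ℕ) :
    ((n : ℝ) + 1) * (1 - e ^ 2) * ∫ u in (0 : ℝ)..(2 * π), ((1 - e * Real.cos u)⁻¹) ^ (n + 2) =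
    (2 * n + 1) * (∫ u in (0 : ℝ)..(2 * π), ((1 - e * Real.cos u)⁻¹) ^ (n + 1))
     - n * ∫ u in (0 : ℝ)..(2 * π), ((1 - e * Real.cos u)⁻¹) ^ n := by
  have hd : ∀ u ∈ Set.uIcc (0 : ℝ) (2 * π),
      HasDerivAt (fun u => e * Real.sin u * ((1 - e * Real.cos u)⁻¹) ^ (n + 1))
      (((n : ℝ) + 1) * (1 - e ^ 2) * ((1 - e * Real.cos u)⁻¹) ^ (n + 2)
        - (2 * n + 1) * ((1 - e * Real.cos u)⁻¹) ^ (n + 1)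
        + n * ((1 - e * Real.cos u)⁻¹) ^ n) u := by
    intro u _
    have hD := (tidal_D_pos e h0 h1 u).ne'
    have h2 : HasDerivAt (fun u => 1 - e * Real.cos u) (e * Real.sin u) u := by
      have := ((Real.hasDerivAt_cos u).const_mul e).const_sub 1
      exact this.congr_deriv (by ring)
    have h3 := ((Real.hasDerivAt_sin u).const_mul e).mul ((h2.inv hD).pow (n + 1))
    refine h3.congr_deriv ?_
    have hs : Real.sin u ^ 2 = 1 - Real.cos u ^ 2 := Real.sin_sq u
    have hc : e * Real.cos u = 1 - (1 - e * Real.cos u) := by ring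
    have hes : (e * Real.sin u) ^ 2 = e ^ 2 - (1 - (1 - e * Real.cos u)) ^ 2 := by
      rw [mul_pow, hs]; ring
    simp only [Pi.inv_apply, Pi.pow_apply, Nat.add_sub_cancel]
    rw [hc]
    generalize e * Real.sin u = S at *
    have : (1 - (1 - (1 - e * Real.cos u))) = 1 - e * Real.cos u := by ring
    rw [this]
    generalize 1 - e * Real.cos u = D at *
    have he : e ^ 2 = S ^ 2 + (1 - D) ^ 2 := by linarith
    rw [he]
    push_cast
    simp only [inv_pow, pow_succ, pow_zero]
    field_simp
    ring
  have i0 := (tidal_int e h0 h1 n).const_mul (n : ℝ)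
  have i1 := (tidal_int e h0 h1 (n + 1)).const_mul (2 * (n : ℝ) + 1)
  have i2 := (tidal_int e h0 h1 (n + 2)).const_mul (((n : ℝ) + 1) * (1 - e ^ 2))
  have := intervalIntegral.integral_eq_sub_of_hasDerivAt hd ((i2.sub i1).add i0)
  rw [intervalIntegral.integral_add (i2.sub i1) i0, intervalIntegral.integral_sub i2 i1] at this
  simp only [intervalIntegral.integral_const_mul, Real.sin_two_pi, Real.sin_zero] at this
  linarith

lemma tidal_base (e s : ℝ) (h0 : 0 ≤ e) (h1 : e < 1) (hs : 0 < s) (hse : s ^ 2 = 1 - e ^ 2) :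
    s * ∫ u in (0 : ℝ)..(2 * π), ((1 - e * Real.cos u)⁻¹) ^ 1 = 2 * π := by
  have hd : ∀ u ∈ Set.uIcc (0 : ℝ) (2 * π),
      HasDerivAt (fun u => u + 2 * Real.arctan (e * Real.sin u / (1 + s - e * Real.cos u)))
      (s * ((1 - e * Real.cos u)⁻¹) ^ 1) u := by
    intro u _
    have hD := tidal_D_pos e h0 h1 u
    have hE : (1 + s - e * Real.cos u) ≠ 0 := by linarith
    have h2 : HasDerivAt (fun u => 1 + s - e * Real.cos u) (e * Real.sin u) u := by
      have := ((Real.hasDerivAt_cos u).const_mul e).const_sub (1 + s)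
      exact this.congr_deriv (by ring)
    have h3 := (hasDerivAt_id u).add
      ((((Real.hasDerivAt_sin u).const_mul e).div h2 hE).arctan.const_mul 2)
    refine h3.congr_deriv ?_
    have hs2 : Real.sin u ^ 2 = 1 - Real.cos u ^ 2 := Real.sin_sq u
    have key : (1 + s - e * Real.cos u) ^ 2 + (e * Real.sin u) ^ 2
        = 2 * (1 + s) * (1 - e * Real.cos u) := by
      rw [mul_pow, hs2]; linear_combination hse
    have hq : 1 + (e * Real.sin u / (1 + s - e * Real.cos u)) ^ 2
        = 2 * (1 + s) * (1 - e * Real.cos u) / (1 + s - e * Real.cos u) ^ 2 := by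
      rw [← key]; field_simp
    simp only [Pi.div_apply]
    rw [hq]
    have hD' := hD.ne'
    have hs1 : 1 + s ≠ 0 := by linarith
    field_simp
    linear_combination (-e ^ 2) * hs2 - hse
  have := intervalIntegral.integral_eq_sub_of_hasDerivAt hd ((tidal_int e h0 h1 1).const_mul s)
  rw [intervalIntegral.integral_const_mul] at this
  rw [this]
  simp

/-- The average over one orbital period of `(a/r)^6 · (df/dt)` equals the averaged
tidal coefficient `N̄(e)`:
`∫₀^{2π} (1 - e cos u)^{-7} du = 2π (1 + (15/2)e² + (45/8)e⁴ + (5/16)e⁶)/(1 - e²)^{13/2}`. -/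
theorem average_tidal_coefficient_N (e : ℝ) (h0 : 0 ≤ e) (h1 : e < 1) :
    ∫ u in (0 : ℝ)..(2 * π), (1 - e * Real.cos u) ^ (-7 : ℤ) =
      2 * π * (1 + (15 / 2) * e ^ 2 + (45 / 8) * e ^ 4 + (5 / 16) * e ^ 6) /
        (1 - e ^ 2) ^ ((13 : ℝ) / 2) := by
  have hp : 0 < 1 - e ^ 2 := by nlinarith
  obtain ⟨s, hs, hse⟩ : ∃ s : ℝ, 0 < s ∧ s ^ 2 = 1 - e ^ 2 :=
    ⟨√(1 - e ^ 2), Real.sqrt_pos.2 hp, Real.sq_sqrt hp.le⟩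
  have hpow : (1 - e ^ 2) ^ ((13 : ℝ) / 2) = s ^ 13 := by
    rw [← hse, ← Real.rpow_natCast s 2, ← Real.rpow_mul hs.le, ← Real.rpow_natCast s 13]
    norm_num
  have hI : (∫ u in (0 : ℝ)..(2 * π), (1 - e * Real.cos u) ^ (-7 : ℤ))
      = ∫ u in (0 : ℝ)..(2 * π), ((1 - e * Real.cos u)⁻¹) ^ 7 := by
    congr 1; ext u
    rw [inv_pow, zpow_neg]; rfl
  rw [hpow, hI]
  have b := tidal_base e s h0 h1 hs hse
  have r0 := tidal_rec e h0 h1 0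
  have r1 := tidal_rec e h0 h1 1
  have r2 := tidal_rec e h0 h1 2
  have r3 := tidal_rec e h0 h1 3
  have r4 := tidal_rec e h0 h1 4
  have r5 := tidal_rec e h0 h1 5
  norm_num only [← hse] at b r0 r1 r2 r3 r4 r5
  generalize (∫ u in (0 : ℝ)..(2 * π), ((1 - e * Real.cos u)⁻¹) ^ 7) = I7 at *
  generalize (∫ u in (0 : ℝ)..(2 * π), ((1 - e * Real.cos u)⁻¹) ^ 6) = I6 at *
  generalize (∫ u in (0 : ℝ)..(2 * π), ((1 - e * Real.cos u)⁻¹) ^ 5) = I5 at *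
  generalize (∫ u in (0 : ℝ)..(2 * π), ((1 - e * Real.cos u)⁻¹) ^ 4) = I4 at *
  generalize (∫ u in (0 : ℝ)..(2 * π), ((1 - e * Real.cos u)⁻¹) ^ 3) = I3 at *
  generalize (∫ u in (0 : ℝ)..(2 * π), ((1 - e * Real.cos u)⁻¹) ^ 2) = I2 at *
  have hs0 := hs.ne'
  have he : e ^ 2 = 1 - s ^ 2 := by linarith
  have he4 : e ^ 4 = (1 - s ^ 2) ^ 2 := by rw [← he]; ring
  have he6 : e ^ 6 = (1 - s ^ 2) ^ 3 := by rw [← he]; ring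
  rw [he, he4, he6]
  generalize (∫ u in (0 : ℝ)..(2 * π), ((1 - e * Real.cos u)⁻¹) ^ 1) = I1 at *
  have e1 : I1 = 2 * π / s := by rw [eq_div_iff hs0]; linarith
  have e2 : I2 = I1 / s ^ 2 := by rw [eq_div_iff (by positivity)]; linarith
  have e3 : I3 = (3 * I2 - I1) / (2 * s ^ 2) := by rw [eq_div_iff (by positivity)]; linarith
  have e4 : I4 = (5 * I3 - 2 * I2) / (3 * s ^ 2) := by rw [eq_div_iff (by positivity)]; linarith
  have e5 : I5 = (7 * I4 - 3 * I3) / (4 * s ^ 2) := by rw [eq_div_iff (by positivity)]; linarith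
  have e6 : I6 = (9 * I5 - 4 * I4) / (5 * s ^ 2) := by rw [eq_div_iff (by positivity)]; linarith
  have e7 : I7 = (11 * I6 - 5 * I5) / (6 * s ^ 2) := by rw [eq_div_iff (by positivity)]; linarith
  rw [e7, e6, e5, e4, e3, e2, e1]
  field_simp
  ring
end

section
/- Abel–Liouville formula: let n be a positive natural number, let A : ℝ → Matrix (Fin n) (Fin n) ℝ be continuous, and let V : ℝ → Matrix (Fin n) (Fin n) ℝ be differentiable with V'(t) = A(t) · V(t) for all t. Then for all t, det(V(t)) = det(V(0)) · exp(∫₀ᵗ trace(A(s)) ds). -/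
open Real Matrix

theorem hasDerivAt_det_aux (n : ℕ)
    (A : ℝ → Matrix (Fin n) (Fin n) ℝ)
    (V : ℝ → Matrix (Fin n) (Fin n) ℝ)
    (hV : ∀ (i j : Fin n) (t : ℝ), HasDerivAt (fun t => V t i j) ((A t * V t) i j) t) (t : ℝ) :
    HasDerivAt (fun t => (V t).det) ((A t).trace * (V t).det) t := by
  have hdet : ∀ M : Matrix (Fin n) (Fin n) ℝ, M.det =
      ∑ σ : Equiv.Perm (Fin n), ((Equiv.Perm.sign σ : ℤ) : ℝ) * ∏ i, M i (σ i) := by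
    intro M
    rw [← Matrix.det_transpose, Matrix.det_apply']
    rfl
  have h1 : HasDerivAt (fun t => (V t).det)
      (∑ σ : Equiv.Perm (Fin n), ((Equiv.Perm.sign σ : ℤ) : ℝ) *
        ∑ i, (∏ j ∈ Finset.univ.erase i, V t j (σ j)) • (A t * V t) i (σ i)) t := by
    simp_rw [hdet]
    refine HasDerivAt.fun_sum fun σ _ => HasDerivAt.const_mul _ ?_
    exact HasDerivAt.fun_finsetProd fun i _ => hV i (σ i) t
  convert h1 using 1
  have h2 : ∀ i, A t i i * (V t).det =
      ((V t).updateRow i (∑ k, A t i k • V t k)).det := by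
    intro i
    rw [Matrix.det_updateRow_sum, smul_eq_mul]
  simp_rw [Matrix.trace, Matrix.diag_apply, Finset.sum_mul, h2, hdet, Finset.mul_sum]
  rw [Finset.sum_comm]
  refine Finset.sum_congr rfl fun σ _ => Finset.sum_congr rfl fun i _ => ?_
  congr 1
  rw [← Finset.mul_prod_erase _ _ (Finset.mem_univ i), smul_eq_mul, mul_comm]
  congr 1
  · refine Finset.prod_congr rfl fun j hj => ?_
    rw [Matrix.updateRow_ne (Finset.ne_of_mem_erase hj)]
  · simp [Matrix.mul_apply, Finset.sum_apply]

/-- Abel–Liouville formula: if `V' (t) = A(t) · V(t)` with `A` continuous, then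
`det V(t) = det V(0) · exp(∫₀ᵗ tr A(s) ds)`. -/
theorem abel_liouville (n : ℕ) (hn : 0 < n)
    (A : ℝ → Matrix (Fin n) (Fin n) ℝ) (hA : Continuous A)
    (V : ℝ → Matrix (Fin n) (Fin n) ℝ)
    (hV : ∀ (i j : Fin n) (t : ℝ), HasDerivAt (fun t => V t i j) ((A t * V t) i j) t) :
    ∀ t : ℝ, (V t).det = (V 0).det * Real.exp (∫ s in (0 : ℝ)..t, (A s).trace) := by
  intro t
  have hc : Continuous fun s => (A s).trace := hA.matrix_trace
  have hI : ∀ t, HasDerivAt (fun t => ∫ s in (0 : ℝ)..t, (A s).trace) (A t).trace t := fun t =>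
    intervalIntegral.integral_hasDerivAt_right (hc.intervalIntegrable _ _)
      hc.stronglyMeasurable.stronglyMeasurableAtFilter hc.continuousAt
  have hF : ∀ t, HasDerivAt
      (fun t => (V t).det * Real.exp (-∫ s in (0 : ℝ)..t, (A s).trace)) 0 t := by
    intro t
    refine ((hasDerivAt_det_aux n A V hV t).fun_mul (hI t).fun_neg.exp).congr_deriv ?_
    ring
  have h := is_const_of_deriv_eq_zero (fun t => (hF t).differentiableAt)
    (fun t => (hF t).deriv) t 0
  simp only [intervalIntegral.integral_same, neg_zero, Real.exp_zero, mul_one] at h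
  rw [← h, mul_assoc, ← Real.exp_add, neg_add_cancel, Real.exp_zero, mul_one]
end

section
/- Automatic reducibility: let J := [[0, 1], [−1, 0]] be the standard symplectic matrix on ℝ², let λ ∈ ℝ, let ω ∈ ℝ, let f : ℝ² → ℝ² be differentiable with Df(z)ᵀ · J · Df(z) = λ·J for every z ∈ ℝ², and let K : ℝ → ℝ² be differentiable with K'(θ) ≠ 0 and f(K(θ)) = K(θ + ω) for every θ. Define N(θ) := ‖K'(θ)‖⁻² (reciprocal of the squared Euclidean norm), v(θ) := J⁻¹·K'(θ)·N(θ), and S(θ) := N(θ + ω)·⟨K'(θ + ω), Df(K(θ))·v(θ)⟩. Then for every θ: Df(K(θ))·K'(θ) = K'(θ + ω) and Df(K(θ))·v(θ) = S(θ)·K'(θ + ω) + λ·v(θ + ω); equivalently, with M(θ) the 2×2 matrix whose columns are K'(θ) and v(θ), one has Df(K(θ))·M(θ) = M(θ + ω)·[[1, S(θ)], [0, λ]]. -/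
open Matrix

/-- Automatic reducibility for conformally symplectic maps of the plane: if `f` is
conformally symplectic with constant conformal factor `λ` (`Df(z)ᵀ J Df(z) = λ J`
with `J = [[0,1],[-1,0]]`) and `K` parametrizes an invariant torus of frequency `ω`
(`f(K(θ)) = K(θ+ω)`, `K'(θ) ≠ 0`), then setting `N(θ) = ‖K'(θ)‖⁻²`,
`v(θ) = J⁻¹ K'(θ) N(θ)` and `S(θ) = N(θ+ω) ⟨K'(θ+ω), Df(K(θ)) v(θ)⟩`, one has
`Df(K(θ)) K'(θ) = K'(θ+ω)` and `Df(K(θ)) v(θ) = S(θ) K'(θ+ω) + λ v(θ+ω)`;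
equivalently `Df(K(θ)) M(θ) = M(θ+ω) [[1, S(θ)], [0, λ]]` where `M(θ)` has
columns `K'(θ)` and `v(θ)`. -/
theorem automatic_reducibility (lam ω : ℝ)
    (f : EuclideanSpace ℝ (Fin 2) → EuclideanSpace ℝ (Fin 2))
    (Df : EuclideanSpace ℝ (Fin 2) → Matrix (Fin 2) (Fin 2) ℝ)
    (hDf : ∀ z, HasFDerivAt f (Matrix.toEuclideanCLM (𝕜 := ℝ) (Df z)) z)
    (hconf : ∀ z, (Df z)ᵀ * !![0, 1; -1, 0] * Df z = lam • !![0, 1; -1, 0])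
    (K K' : ℝ → EuclideanSpace ℝ (Fin 2))
    (hK : ∀ θ, HasDerivAt K (K' θ) θ)
    (hK0 : ∀ θ, K' θ ≠ 0)
    (hinv : ∀ θ, f (K θ) = K (θ + ω))
    (N : ℝ → ℝ) (hN : ∀ θ, N θ = (‖K' θ‖ ^ 2)⁻¹)
    (v : ℝ → EuclideanSpace ℝ (Fin 2))
    (hv : ∀ θ, v θ = N θ • Matrix.toEuclideanCLM (𝕜 := ℝ) (!![0, 1; -1, 0])⁻¹ (K' θ))
    (S : ℝ → ℝ)
    (hS : ∀ θ, S θ = N (θ + ω) *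
      inner ℝ (K' (θ + ω)) (Matrix.toEuclideanCLM (𝕜 := ℝ) (Df (K θ)) (v θ))) :
    ∀ θ : ℝ,
      Matrix.toEuclideanCLM (𝕜 := ℝ) (Df (K θ)) (K' θ) = K' (θ + ω) ∧
      Matrix.toEuclideanCLM (𝕜 := ℝ) (Df (K θ)) (v θ) =
        S θ • K' (θ + ω) + lam • v (θ + ω) ∧
      Df (K θ) * Matrix.of (fun i j => ![K' θ i, v θ i] j) =
        Matrix.of (fun i j => ![K' (θ + ω) i, v (θ + ω) i] j) * !![1, S θ; 0, lam] := by
  intro θ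
  have hJ : (!![0, 1; -1, 0] : Matrix (Fin 2) (Fin 2) ℝ)⁻¹ = !![0, -1; 1, 0] := by
    apply Matrix.inv_eq_right_inv
    ext i j
    fin_cases i <;> fin_cases j <;> simp [Matrix.mul_apply, Fin.sum_univ_two]
  have happ : ∀ (A : Matrix (Fin 2) (Fin 2) ℝ) (x : EuclideanSpace ℝ (Fin 2)) (i : Fin 2),
      (Matrix.toEuclideanCLM (𝕜 := ℝ) A x) i = A i 0 * x 0 + A i 1 * x 1 := by
    intro A x i
    simp [Matrix.mulVec, dotProduct, Fin.sum_univ_two]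
  have h1 : Matrix.toEuclideanCLM (𝕜 := ℝ) (Df (K θ)) (K' θ) = K' (θ + ω) := by
    have e1 : HasDerivAt (fun t => f (K t))
        (Matrix.toEuclideanCLM (𝕜 := ℝ) (Df (K θ)) (K' θ)) θ :=
      (hDf (K θ)).comp_hasDerivAt θ (hK θ)
    have e2 : HasDerivAt (fun t => K (t + ω)) (K' (θ + ω)) θ :=
      (hK (θ + ω)).comp_add_const θ ω
    have e3 : (fun t => f (K t)) = fun t => K (t + ω) := funext hinv
    rw [e3] at e1
    exact e1.unique e2
  have hdet : Df (K θ) 0 0 * Df (K θ) 1 1 - Df (K θ) 1 0 * Df (K θ) 0 1 = lam := by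
    have h := congrFun (congrFun (hconf (K θ)) 0) 1
    simp [Matrix.mul_apply, Fin.sum_univ_two] at h
    linarith
  have hnorm : ∀ t, N t * (K' t 0 ^ 2 + K' t 1 ^ 2) = 1 := by
    intro t
    have hne : ‖K' t‖ ^ 2 ≠ 0 := pow_ne_zero 2 (norm_ne_zero_iff.mpr (hK0 t))
    have : ‖K' t‖ ^ 2 = K' t 0 ^ 2 + K' t 1 ^ 2 := by
      rw [EuclideanSpace.real_norm_sq_eq, Fin.sum_univ_two]
    rw [hN, ← this, inv_mul_cancel₀ hne]
  have hv0 : ∀ t, v t 0 = - (N t * K' t 1) := by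
    intro t
    rw [hv, hJ, PiLp.smul_apply, happ]
    simp
  have hv1 : ∀ t, v t 1 = N t * K' t 0 := by
    intro t
    rw [hv, hJ, PiLp.smul_apply, happ]
    simp
  have a0 := (happ (Df (K θ)) (K' θ) 0).symm
  have a1 := (happ (Df (K θ)) (K' θ) 1).symm
  rw [h1] at a0 a1
  have hS' : S θ = N (θ + ω) *
      (K' (θ + ω) 0 * (Df (K θ) 0 0 * v θ 0 + Df (K θ) 0 1 * v θ 1) +
       K' (θ + ω) 1 * (Df (K θ) 1 0 * v θ 0 + Df (K θ) 1 1 * v θ 1)) := by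
    rw [hS, PiLp.inner_apply, Fin.sum_univ_two, happ, happ]
    simp [mul_comm]
  have hom : K' (θ + ω) 0 * (Df (K θ) 1 0 * v θ 0 + Df (K θ) 1 1 * v θ 1) -
      K' (θ + ω) 1 * (Df (K θ) 0 0 * v θ 0 + Df (K θ) 0 1 * v θ 1) = lam := by
    rw [← a0, ← a1, hv0, hv1]
    linear_combination lam * hnorm θ + N θ * (K' θ 0 ^ 2 + K' θ 1 ^ 2) * hdet
  have n' := hnorm (θ + ω)
  have b0 : Df (K θ) 0 0 * v θ 0 + Df (K θ) 0 1 * v θ 1 =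
      S θ * K' (θ + ω) 0 + lam * v (θ + ω) 0 := by
    rw [hS', hv0 (θ + ω)]
    generalize Df (K θ) 0 0 * v θ 0 + Df (K θ) 0 1 * v θ 1 = x at *
    generalize Df (K θ) 1 0 * v θ 0 + Df (K θ) 1 1 * v θ 1 = y at *
    linear_combination (-x) * n' - N (θ + ω) * K' (θ + ω) 1 * hom
  have b1 : Df (K θ) 1 0 * v θ 0 + Df (K θ) 1 1 * v θ 1 =
      S θ * K' (θ + ω) 1 + lam * v (θ + ω) 1 := by
    rw [hS', hv1 (θ + ω)]
    generalize Df (K θ) 0 0 * v θ 0 + Df (K θ) 0 1 * v θ 1 = x at *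
    generalize Df (K θ) 1 0 * v θ 0 + Df (K θ) 1 1 * v θ 1 = y at *
    linear_combination (-y) * n' + N (θ + ω) * K' (θ + ω) 0 * hom
  refine ⟨h1, ?_, ?_⟩
  · ext i
    rw [happ]
    fin_cases i
    · simpa using b0
    · simpa using b1
  · ext i j
    rw [Matrix.mul_apply, Matrix.mul_apply, Fin.sum_univ_two, Fin.sum_univ_two]
    fin_cases i <;> fin_cases j
    · simpa using a0
    · simpa [mul_comm] using b0
    · simpa using a1
    · simpa [mul_comm] using b1
end

section
/- Invariant bundles: under the hypotheses of automatic reducibility — J := [[0, 1], [−1, 0]], λ, ω ∈ ℝ, f : ℝ² → ℝ² differentiable with Df(z)ᵀ·J·Df(z) = λ·J for all z, K : ℝ → ℝ² differentiable with K'(θ) ≠ 0 and f(K(θ)) = K(θ + ω) for all θ, N(θ) := ‖K'(θ)‖⁻², v(θ) := J⁻¹·K'(θ)·N(θ), S(θ) := N(θ + ω)·⟨K'(θ + ω), Df(K(θ))·v(θ)⟩ — suppose in addition that B : ℝ → ℝ satisfies B(θ) − λ·B(θ + ω) = −S(θ) for all θ. Define E^c(θ) := K'(θ) and E^s(θ)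 := B(θ)·K'(θ) + v(θ). Then for every θ: Df(K(θ))·E^c(θ) = E^c(θ + ω) and Df(K(θ))·E^s(θ) = λ·E^s(θ + ω); i.e. E^c and E^s span the tangent and stable invariant line bundles over the torus, with multipliers 1 and λ respectively. -/
open Matrix

/-- Invariant bundles over a torus of a conformally symplectic map of the plane:
with the automatic-reducibility data and a solution `B` of the cohomological
equation `B(θ) - λ B(θ+ω) = -S(θ)`, the vectors `E^c(θ) = K'(θ)` and
`E^s(θ) = B(θ) K'(θ) + v(θ)` satisfy `Df(K(θ)) E^c(θ) = E^c(θ+ω)` and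
`Df(K(θ)) E^s(θ) = λ E^s(θ+ω)`, i.e. they span the tangent and stable invariant
line bundles, with multipliers `1` and `λ`. -/
theorem invariant_bundles (lam ω : ℝ)
    (f : EuclideanSpace ℝ (Fin 2) → EuclideanSpace ℝ (Fin 2))
    (Df : EuclideanSpace ℝ (Fin 2) → Matrix (Fin 2) (Fin 2) ℝ)
    (hDf : ∀ z, HasFDerivAt f (Matrix.toEuclideanCLM (𝕜 := ℝ) (Df z)) z)
    (hconf : ∀ z, (Df z)ᵀ * !![0, 1; -1, 0] * Df z = lam • !![0, 1; -1, 0])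
    (K K' : ℝ → EuclideanSpace ℝ (Fin 2))
    (hK : ∀ θ, HasDerivAt K (K' θ) θ)
    (hK0 : ∀ θ, K' θ ≠ 0)
    (hinv : ∀ θ, f (K θ) = K (θ + ω))
    (N : ℝ → ℝ) (hN : ∀ θ, N θ = (‖K' θ‖ ^ 2)⁻¹)
    (v : ℝ → EuclideanSpace ℝ (Fin 2))
    (hv : ∀ θ, v θ = N θ • Matrix.toEuclideanCLM (𝕜 := ℝ) (!![0, 1; -1, 0])⁻¹ (K' θ))
    (S : ℝ → ℝ)
    (hS : ∀ θ, S θ = N (θ + ω) *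
      inner ℝ (K' (θ + ω)) (Matrix.toEuclideanCLM (𝕜 := ℝ) (Df (K θ)) (v θ)))
    (B : ℝ → ℝ)
    (hB : ∀ θ, B θ - lam * B (θ + ω) = -S θ) :
    ∀ θ : ℝ,
      Matrix.toEuclideanCLM (𝕜 := ℝ) (Df (K θ)) (K' θ) = K' (θ + ω) ∧
      Matrix.toEuclideanCLM (𝕜 := ℝ) (Df (K θ)) (B θ • K' θ + v θ) =
        lam • (B (θ + ω) • K' (θ + ω) + v (θ + ω)) := by
  intro θ
  have h1 : Matrix.toEuclideanCLM (𝕜 := ℝ) (Df (K θ)) (K' θ) = K' (θ + ω) := by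
    have e1 : HasDerivAt (fun t => f (K t))
        (Matrix.toEuclideanCLM (𝕜 := ℝ) (Df (K θ)) (K' θ)) θ :=
      (hDf (K θ)).comp_hasDerivAt θ (hK θ)
    have e2 : HasDerivAt (fun t => f (K t)) (K' (θ + ω)) θ := by
      have : (fun t => f (K t)) = fun t => K (t + ω) := funext hinv
      rw [this]
      exact (hK (θ + ω)).comp_add_const θ ω
    exact e1.unique e2
  refine ⟨h1, ?_⟩
  have hJ : (!![0, 1; -1, 0] : Matrix (Fin 2) (Fin 2) ℝ)⁻¹ = !![0, -1; 1, 0] := by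
    apply Matrix.inv_eq_right_inv
    ext i j
    fin_cases i <;> fin_cases j <;> simp
  have app : ∀ (M : Matrix (Fin 2) (Fin 2) ℝ) (x : EuclideanSpace ℝ (Fin 2)) (i : Fin 2),
      Matrix.toEuclideanCLM (𝕜 := ℝ) M x i = M i 0 * x 0 + M i 1 * x 1 := by
    intro M x i
    simp [Matrix.ofLp_toEuclideanCLM, Matrix.mulVec, dotProduct, Fin.sum_univ_two]
  have hdet : Df (K θ) 0 0 * Df (K θ) 1 1 - Df (K θ) 0 1 * Df (K θ) 1 0 = lam := by
    have := congrFun (congrFun (hconf (K θ)) 0) 1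
    simp [Matrix.mul_apply, Fin.sum_univ_two] at this
    linarith
  have hn : ∀ t, N t * (K' t 0 ^ 2 + K' t 1 ^ 2) = 1 := by
    intro t
    have h0 : ‖K' t‖ ^ 2 ≠ 0 := pow_ne_zero _ (norm_ne_zero_iff.2 (hK0 t))
    have h2 : ‖K' t‖ ^ 2 = K' t 0 ^ 2 + K' t 1 ^ 2 := by
      rw [EuclideanSpace.norm_sq_eq]; simp [Fin.sum_univ_two]
    rw [hN, ← h2, inv_mul_cancel₀ h0]
  have v0 : ∀ t, v t 0 = - (N t * K' t 1) := by
    intro t; rw [hv, hJ, PiLp.smul_apply, app]; simp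
  have v1 : ∀ t, v t 1 = N t * K' t 0 := by
    intro t; rw [hv, hJ, PiLp.smul_apply, app]; simp
  have q0 := congrArg (fun z : EuclideanSpace ℝ (Fin 2) => z 0) h1
  have q1 := congrArg (fun z : EuclideanSpace ℝ (Fin 2) => z 1) h1
  simp only [app] at q0 q1
  have hs := hS θ
  have hinner : ∀ x y : EuclideanSpace ℝ (Fin 2), inner ℝ x y = x 0 * y 0 + x 1 * y 1 := by
    intro x y
    simp [PiLp.inner_apply, Fin.sum_univ_two, mul_comm]
  rw [hinner, app, app] at hs
  have hb : B θ = lam * B (θ + ω) - S θ := by linarith [hB θ]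
  have n1 := hn θ
  have n2 := hn (θ + ω)
  have w0 := v0 θ
  have w1 := v1 θ
  have u0 := v0 (θ + ω)
  have u1 := v1 (θ + ω)
  rw [map_add, map_smul, h1]
  -- determinant of (q, w)
  have hd : K' (θ + ω) 0 * (Df (K θ) 1 0 * v θ 0 + Df (K θ) 1 1 * v θ 1)
      - K' (θ + ω) 1 * (Df (K θ) 0 0 * v θ 0 + Df (K θ) 0 1 * v θ 1) = lam := by
    rw [← q0, ← q1, w0, w1, ← hdet]
    linear_combination (Df (K θ) 0 0 * Df (K θ) 1 1 - Df (K θ) 0 1 * Df (K θ) 1 0) * n1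
  ext i
  fin_cases i
  · simp only [PiLp.add_apply, PiLp.smul_apply, smul_eq_mul, app, Fin.zero_eta, Fin.mk_one]
    rw [hb, u0, hs]
    generalize Df (K θ) 1 0 * v θ 0 + Df (K θ) 1 1 * v θ 1 = b at *
    generalize Df (K θ) 0 0 * v θ 0 + Df (K θ) 0 1 * v θ 1 = a at *
    linear_combination (-a) * n2 - N (θ + ω) * K' (θ + ω) 1 * hd
  · simp only [PiLp.add_apply, PiLp.smul_apply, smul_eq_mul, app, Fin.zero_eta, Fin.mk_one]
    rw [hb, u1, hs]
    generalize Df (K θ) 1 0 * v θ 0 + Df (K θ) 1 1 * v θ 1 = b at *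
    generalize Df (K θ) 0 0 * v θ 0 + Df (K θ) 0 1 * v θ 1 = a at *
    linear_combination (-b) * n2 + N (θ + ω) * K' (θ + ω) 0 * hd
end

section
/- Constancy of the conformal factor in dimension at least 4: let n ≥ 2, let J denote the standard symplectic matrix on ℝ^{2n} (block form [[0, I_n], [−I_n, 0]]), let f : ℝ^{2n} → ℝ^{2n} be a C² map, and let λ : ℝ^{2n} → ℝ be a function such that Df(x)ᵀ·J·Df(x) = λ(x)·J for every x ∈ ℝ^{2n}, with Df(x) invertible for every x. Then λ is constant on ℝ^{2n}. -/
open Matrix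

/-- The standard symplectic matrix `J = [[0, Iₙ], [-Iₙ, 0]]` on `ℝ^{2n}`. -/
def stdSymplecticMatrix (n : ℕ) : Matrix (Fin n ⊕ Fin n) (Fin n ⊕ Fin n) ℝ :=
  Matrix.fromBlocks 0 1 (-1) 0

theorem cyclic_aux {E : Type*} [NormedAddCommGroup E] [NormedSpace ℝ E]
    (B : E →L[ℝ] E →L[ℝ] ℝ) (hB : ∀ u v, B u v = - B v u)
    (f : E → E) (hf : ContDiff ℝ 2 f) (lam : E → ℝ)
    (h : ∀ x u v, B (fderiv ℝ f x u) (fderiv ℝ f x v) = lam x * B u v)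
    (a b : E) (hab : B a b = 1) :
    Differentiable ℝ lam ∧ ∀ x u v w, fderiv ℝ lam x u * B v w + fderiv ℝ lam x v * B w u
      + fderiv ℝ lam x w * B u v = 0 := by
  have hg : Differentiable ℝ (fderiv ℝ f) :=
    (hf.fderiv_right (m := 1) (by norm_num)).differentiable (by norm_num)
  have hgu : ∀ x u, HasFDerivAt (fun y => fderiv ℝ f y u)
      ((fderiv ℝ (fderiv ℝ f) x).flip u) x := by
    intro x u
    have := (hg x).hasFDerivAt.clm_apply (hasFDerivAt_const u x)
    refine this.congr_fderiv ?_
    ext w; simp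
  have hd : ∀ x u v, HasFDerivAt (fun y => B (fderiv ℝ f y u) (fderiv ℝ f y v)) _ x :=
    fun x u v => B.hasFDerivAt_of_bilinear (hgu x u) (hgu x v)
  have hlam : Differentiable ℝ lam := by
    intro x
    have h1 := (hd x a b).differentiableAt
    have h2 : (fun y => B (fderiv ℝ f y a) (fderiv ℝ f y b)) = lam := by
      funext y; rw [h, hab, mul_one]
    rwa [h2] at h1
  refine ⟨hlam, fun x u v w => ?_⟩
  have key : ∀ u v w, fderiv ℝ lam x w * B u v =
      B (fderiv ℝ f x u) (fderiv ℝ (fderiv ℝ f) x w v)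
        + B (fderiv ℝ (fderiv ℝ f) x w u) (fderiv ℝ f x v) := by
    intro u v w
    have h1 := hd x u v
    have h2 : (fun y => B (fderiv ℝ f y u) (fderiv ℝ f y v)) = fun y => lam y * B u v := by
      funext y; rw [h]
    rw [h2] at h1
    have h3 := (hlam x).hasFDerivAt.mul_const (B u v)
    have h4 := congrArg (fun L : E →L[ℝ] ℝ => L w) (h3.unique h1)
    simp at h4
    linarith
  have sym : ∀ u v, fderiv ℝ (fderiv ℝ f) x u v = fderiv ℝ (fderiv ℝ f) x v u := by
    intro u v
    exact (hf.contDiffAt.isSymmSndFDerivAt (by simp)) u v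
  rw [key, key, key, sym w v, sym w u, sym v u,
    hB (fderiv ℝ (fderiv ℝ f) x u v), hB (fderiv ℝ (fderiv ℝ f) x v w),
    hB (fderiv ℝ (fderiv ℝ f) x u w)]
  ring

/-- Constancy of the conformal factor in dimension at least 4: if `f : ℝ^{2n} → ℝ^{2n}`
(`n ≥ 2`) is `C²` with everywhere invertible derivative `Df`, and
`Df(x)ᵀ J Df(x) = λ(x) J` for a function `λ`, then `λ` is constant. -/
theorem conformal_factor_constant (n : ℕ) (hn : 2 ≤ n)
    (f : ((Fin n ⊕ Fin n) → ℝ) → ((Fin n ⊕ Fin n) → ℝ)) (hf : ContDiff ℝ 2 f)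
    (Df : ((Fin n ⊕ Fin n) → ℝ) → Matrix (Fin n ⊕ Fin n) (Fin n ⊕ Fin n) ℝ)
    (hDf : ∀ x, HasFDerivAt f (LinearMap.toContinuousLinearMap (Df x).mulVecLin) x)
    (hDfinv : ∀ x, IsUnit (Df x))
    (lam : ((Fin n ⊕ Fin n) → ℝ) → ℝ)
    (hconf : ∀ x, (Df x)ᵀ * stdSymplecticMatrix n * Df x = lam x • stdSymplecticMatrix n) :
    ∀ x y, lam x = lam y := by
  classical
  set J := stdSymplecticMatrix n with hJ
  let B : ((Fin n ⊕ Fin n) → ℝ) →L[ℝ] ((Fin n ⊕ Fin n) → ℝ) →L[ℝ] ℝ :=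
    LinearMap.toContinuousLinearMap
      (LinearMap.toContinuousLinearMap.toLinearMap ∘ₗ (Matrix.toLinearMap₂' ℝ J))
  have hBdef : ∀ u v, B u v = u ⬝ᵥ (J *ᵥ v) := by
    intro u v
    exact Matrix.toLinearMap₂'_apply' J u v
  have hJt : Jᵀ = -J := by
    simp [hJ, stdSymplecticMatrix, Matrix.fromBlocks_transpose, Matrix.fromBlocks_neg]
  have hB : ∀ u v, B u v = - B v u := by
    intro u v
    rw [hBdef, hBdef, Matrix.dotProduct_mulVec v, ← Matrix.mulVec_transpose, hJt,
      Matrix.neg_mulVec, neg_dotProduct, neg_neg, dotProduct_comm]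
  have hfd : ∀ x u, fderiv ℝ f x u = Df x *ᵥ u := by
    intro x u
    rw [(hDf x).fderiv]; rfl
  have h : ∀ x u v, B (fderiv ℝ f x u) (fderiv ℝ f x v) = lam x * B u v := by
    intro x u v
    have h1 : lam x * B u v = u ⬝ᵥ ((lam x • J) *ᵥ v) := by
      rw [hBdef, Matrix.smul_mulVec, dotProduct_smul, smul_eq_mul]
    rw [h1, ← hconf, hBdef, hfd, hfd, ← Matrix.mulVec_mulVec, ← Matrix.mulVec_mulVec,
      Matrix.dotProduct_mulVec u, Matrix.vecMul_transpose]
  have hBs : ∀ i j, B (Pi.single i 1) (Pi.single j 1) = J i j := by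
    intro i j
    rw [hBdef]; simp
  have hJ1 : ∀ i, J (Sum.inl i) (Sum.inr i) = 1 := by
    intro i; simp [hJ, stdSymplecticMatrix]
  have i0 : Fin n := ⟨0, by omega⟩
  obtain ⟨hd, hc⟩ := cyclic_aux B hB f hf lam h (Pi.single (Sum.inl i0) 1)
    (Pi.single (Sum.inr i0) 1) (by rw [hBs, hJ1])
  have hz : ∀ x, fderiv ℝ lam x = 0 := by
    intro x
    have : Nontrivial (Fin n) := Fin.nontrivial_iff_two_le.mpr hn
    have hs : ∀ k, fderiv ℝ lam x (Pi.single k 1) = 0 := by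
      intro k
      obtain ⟨j, hj⟩ := exists_ne (Sum.elim id id k : Fin n)
      have := hc x (Pi.single k 1) (Pi.single (Sum.inl j) 1) (Pi.single (Sum.inr j) 1)
      rw [hBs, hBs, hBs, hJ1] at this
      have e1 : J (Sum.inr j) k = 0 := by
        rcases k with k | k
        · simp at hj; simp [hJ, stdSymplecticMatrix, Matrix.one_apply, hj]
        · simp [hJ, stdSymplecticMatrix]
      have e2 : J k (Sum.inl j) = 0 := by
        rcases k with k | k
        · simp [hJ, stdSymplecticMatrix]
        · simp at hj; simp [hJ, stdSymplecticMatrix, Matrix.one_apply, Ne.symm hj]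
      rw [e1, e2] at this
      linarith
    have : (fderiv ℝ lam x).toLinearMap = 0 := by
      refine (Pi.basisFun ℝ (Fin n ⊕ Fin n)).ext fun k => ?_
      simpa using hs k
    ext v
    exact congrArg (fun L => L v) this
  exact is_const_of_fderiv_eq_zero hd hz
end

section
/- For every eccentricity e with 0 ≤ e < 1, let u_e : ℝ → ℝ denote the inverse of the Kepler map t_e(u) := u − e·sin u. Then the time averages over one orbital period of the tidal factors of the spin-orbit problem equal the averaged coefficients: ∫₀^{2π} (1 − e·cos(u_e(t)))^(−6) dt = 2π·L̄(e) and ∫₀^{2π} √(1 − e²)·(1 − e·cos(u_e(t)))^(−8) dt = 2π·N̄(e); in particular, the volume contraction of the non-averaged spin-orbit flow over one period, exp(−μ·∫₀^{2π}(a/r(t))⁶ dt), coincides with that of the averaged flow, exp(−μ·L̄(e)·2π), for every μ. -/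
open Real

/-- The averaged tidal coefficient `L̄(e) = (1 + 3e² + (3/8)e⁴)/(1-e²)^{9/2}`. -/
noncomputable def Lbar (e : ℝ) : ℝ :=
  (1 + 3 * e ^ 2 + (3 / 8) * e ^ 4) / (1 - e ^ 2) ^ ((9 : ℝ) / 2)

/-- The averaged tidal coefficient
`N̄(e) = (1 + (15/2)e² + (45/8)e⁴ + (5/16)e⁶)/(1-e²)⁶`. -/
noncomputable def Nbar (e : ℝ) : ℝ :=
  (1 + (15 / 2) * e ^ 2 + (45 / 8) * e ^ 4 + (5 / 16) * e ^ 6) / (1 - e ^ 2) ^ 6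

lemma aux_pos (e : ℝ) (h0 : 0 ≤ e) (h1 : e < 1) (u : ℝ) : 0 < 1 - e * cos u := by
  nlinarith [cos_le_one u]

lemma aux_int (e : ℝ) (h0 : 0 ≤ e) (h1 : e < 1) (n : ℕ) (a b : ℝ) :
    IntervalIntegrable (fun u => ((1 - e * cos u) ^ n)⁻¹) MeasureTheory.volume a b := by
  apply Continuous.intervalIntegrable
  exact Continuous.inv₀ (by fun_prop) (fun u => (pow_pos (aux_pos e h0 h1 u) n).ne')

lemma aux_rec (e : ℝ) (h0 : 0 ≤ e) (h1 : e < 1) (n : ℕ) :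
    ((n : ℝ) + 1) * (1 - e ^ 2) * (∫ u in (0 : ℝ)..(2 * π), ((1 - e * cos u) ^ (n + 2))⁻¹)
      = (2 * n + 1) * (∫ u in (0 : ℝ)..(2 * π), ((1 - e * cos u) ^ (n + 1))⁻¹)
        - n * (∫ u in (0 : ℝ)..(2 * π), ((1 - e * cos u) ^ n)⁻¹) := by
  have i0 := aux_int e h0 h1 n 0 (2 * π)
  have i1 := aux_int e h0 h1 (n + 1) 0 (2 * π)
  have i2 := aux_int e h0 h1 (n + 2) 0 (2 * π)
  have key := intervalIntegral.integral_eq_sub_of_hasDerivAt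
    (f := fun u => e * sin u * ((1 - e * cos u) ^ (n + 1))⁻¹)
    (f' := fun u => ((n : ℝ) + 1) * (1 - e ^ 2) * ((1 - e * cos u) ^ (n + 2))⁻¹
      - (2 * n + 1) * ((1 - e * cos u) ^ (n + 1))⁻¹ + n * ((1 - e * cos u) ^ n)⁻¹)
    (a := 0) (b := 2 * π) (fun u _ => by
      have hw := aux_pos e h0 h1 u
      have hd : HasDerivAt (fun u => 1 - e * cos u) (e * sin u) u := by
        have := ((hasDerivAt_cos u).const_mul e).const_sub 1
        exact this.congr_deriv (by ring)
      have hp := (hd.pow (n + 1)).inv (pow_pos hw (n + 1)).ne'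
      have := ((hasDerivAt_sin u).const_mul e).mul hp
      refine this.congr_deriv ?_
      have hs : sin u ^ 2 = 1 - cos u ^ 2 := by have := sin_sq_add_cos_sq u; linarith
      simp only [Pi.inv_apply, Pi.pow_apply, Nat.add_sub_cancel]
      push_cast
      generalize hc : cos u = c at *
      generalize sin u = s at *
      have hw' := hw.ne'
      field_simp
      ring_nf
      simp only [hs]
      ring)
    (((i2.const_mul _).sub (i1.const_mul _)).add (i0.const_mul _))
  rw [intervalIntegral.integral_add ((i2.const_mul _).sub (i1.const_mul _)) (i0.const_mul _),
    intervalIntegral.integral_sub (i2.const_mul _) (i1.const_mul _)] at key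
  simp only [intervalIntegral.integral_const_mul, sin_two_pi, sin_zero] at key
  linarith

lemma aux_base (e : ℝ) (h0 : 0 ≤ e) (h1 : e < 1) :
    √(1 - e ^ 2) * (∫ u in (0 : ℝ)..(2 * π), ((1 - e * cos u) ^ 1)⁻¹) = 2 * π := by
  have hs0 : 0 < 1 - e ^ 2 := by nlinarith
  have hr0 := sqrt_pos.2 hs0
  have hr2 := sq_sqrt hs0.le
  set r := √(1 - e ^ 2) with hr
  obtain ⟨b, hb⟩ : ∃ b, b = e / (1 + r) := ⟨_, rfl⟩
  have hb0 : 0 ≤ b := by rw [hb]; positivity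
  have hb1 : b < 1 := by rw [hb, div_lt_one (by positivity)]; linarith
  have he : e = b * (1 + r) := by rw [hb]; field_simp
  have hrb : r * (1 + b ^ 2) = 1 - b ^ 2 := by
    have : (1 + r) * (r * (1 + b ^ 2) - (1 - b ^ 2)) = 0 := by
      have : b ^ 2 * (1 + r) ^ 2 = 1 - r ^ 2 := by rw [hr2, ← mul_pow, ← he]; ring
      linear_combination this
    have h2 : 1 + r ≠ 0 := by positivity
    have := (mul_eq_zero.1 this).resolve_left h2
    linarith
  have heb : e * (1 + b ^ 2) = 2 * b := by rw [he]; linear_combination b * hrb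
  rw [← intervalIntegral.integral_const_mul]
  have key := intervalIntegral.integral_eq_sub_of_hasDerivAt
    (f := fun u => u + 2 * arctan (b * sin u / (1 - b * cos u)))
    (f' := fun u => r * ((1 - e * cos u) ^ 1)⁻¹)
    (a := 0) (b := 2 * π) (fun u _ => by
      have hw := aux_pos e h0 h1 u
      have hD := aux_pos b hb0 hb1 u
      have hd : HasDerivAt (fun u => 1 - b * cos u) (b * sin u) u := by
        have := ((hasDerivAt_cos u).const_mul b).const_sub 1
        exact this.congr_deriv (by ring)
      have h3 := (((hasDerivAt_sin u).const_mul b).div hd hD.ne').arctan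
      refine ((hasDerivAt_id u).add (h3.const_mul 2)).congr_deriv ?_
      have hsc := sin_sq_add_cos_sq u
      simp only [Pi.div_apply]
      generalize cos u = c at *
      generalize sin u = s at *
      have hQ : 0 < (1 - b * c) ^ 2 + (b * s) ^ 2 := by positivity
      have h4 : 1 / (1 + (b * s / (1 - b * c)) ^ 2) * ((b * c * (1 - b * c) - b * s * (b * s)) / (1 - b * c) ^ 2)
         = (b * c - b ^ 2) / ((1 - b * c) ^ 2 + (b * s) ^ 2) := by
        have hD' := hD.ne'
        have hQ' := hQ.ne'
        have : 1 + (b * s / (1 - b * c)) ^ 2 = ((1 - b * c) ^ 2 + (b * s) ^ 2) / (1 - b * c) ^ 2 := by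
          field_simp
        rw [this, one_div_div, div_mul_div_comm, mul_comm, mul_div_mul_right _ _ (by positivity)]
        congr 1
        linear_combination (-b ^ 2) * hsc
      rw [h4]
      have hQe : (1 - b * c) ^ 2 + (b * s) ^ 2 = (1 + b ^ 2) * (1 - e * c) := by
        linear_combination b ^ 2 * hsc + c * heb
      rw [hQe] 
      have hw' := hw.ne'
      have hbb : (1 + b ^ 2) ≠ 0 := by positivity
      have h5 : (1 + b ^ 2) * (1 - e * c) ≠ 0 := mul_ne_zero hbb hw'
      rw [pow_one, ← div_eq_mul_inv, eq_div_iff hw']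
      have h6 : (b * c - b ^ 2) / ((1 + b ^ 2) * (1 - e * c)) * (1 - e * c)
          = (b * c - b ^ 2) / (1 + b ^ 2) := by
        rw [div_mul_eq_mul_div, mul_div_mul_right _ _ hw']
      rw [add_mul, mul_assoc, h6]
      field_simp
      linear_combination (-1) * hrb - c * heb)
    ((aux_int e h0 h1 1 0 (2 * π)).const_mul _)
  rw [key]
  simp

/-- The time averages over one orbital period of the tidal factors of the spin-orbit
problem equal the averaged coefficients: with `u_e` the inverse of the Kepler map
`t_e(u) = u - e sin u`, one has `∫₀^{2π} (1 - e cos u_e(t))⁻⁶ dt = 2π L̄(e)` and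
`∫₀^{2π} √(1-e²) (1 - e cos u_e(t))⁻⁸ dt = 2π N̄(e)`; in particular the volume
contraction over a period of the non-averaged flow coincides with that of the
averaged flow for every dissipation `μ`. -/
theorem averaged_tidal_coefficients (e : ℝ) (h0 : 0 ≤ e) (h1 : e < 1)
    (uinv : ℝ → ℝ)
    (hleft : Function.LeftInverse uinv (fun u : ℝ => u - e * Real.sin u))
    (hright : Function.RightInverse uinv (fun u : ℝ => u - e * Real.sin u)) :
    (∫ t in (0 : ℝ)..(2 * π), (1 - e * Real.cos (uinv t)) ^ (-6 : ℤ) = 2 * π * Lbar e) ∧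
    (∫ t in (0 : ℝ)..(2 * π),
        Real.sqrt (1 - e ^ 2) * (1 - e * Real.cos (uinv t)) ^ (-8 : ℤ) =
      2 * π * Nbar e) ∧
    (∀ μ : ℝ,
      Real.exp (-μ * ∫ t in (0 : ℝ)..(2 * π), (1 - e * Real.cos (uinv t)) ^ (-6 : ℤ)) =
        Real.exp (-μ * Lbar e * (2 * π))) := by
  have hs0 : 0 < 1 - e ^ 2 := by nlinarith
  have hr0 := sqrt_pos.2 hs0
  have hr2 := sq_sqrt hs0.le
  have hder : ∀ u : ℝ, HasDerivAt (fun u : ℝ => u - e * Real.sin u) (1 - e * cos u) u :=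
    fun u => (hasDerivAt_id u).sub ((hasDerivAt_sin u).const_mul e)
  have hmono : StrictMono (fun u : ℝ => u - e * Real.sin u) := by
    apply strictMono_of_deriv_pos
    intro u
    rw [(hder u).deriv]
    exact aux_pos e h0 h1 u
  have hcont : Continuous uinv :=
    (hmono.orderIsoOfRightInverse _ uinv hright).symm.continuous
  have hsub : ∀ n : ℕ, ∫ t in (0 : ℝ)..(2 * π), ((1 - e * cos (uinv t)) ^ (n + 1))⁻¹
      = ∫ u in (0 : ℝ)..(2 * π), ((1 - e * cos u) ^ n)⁻¹ := by
    intro n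
    have := intervalIntegral.integral_comp_mul_deriv (a := 0) (b := 2 * π)
      (f := fun u : ℝ => u - e * Real.sin u) (f' := fun u => 1 - e * cos u)
      (g := fun t => ((1 - e * cos (uinv t)) ^ (n + 1))⁻¹)
      (fun u _ => hder u) (by fun_prop)
      (Continuous.inv₀ (by fun_prop) (fun u => (pow_pos (aux_pos e h0 h1 _) _).ne'))
    simp only [sin_zero, sin_two_pi, mul_zero, sub_zero] at this
    rw [← this]
    apply intervalIntegral.integral_congr
    intro u _
    have hu : uinv (u - e * sin u) = u := hleft u
    have hw := (aux_pos e h0 h1 u).ne'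
    simp only [Function.comp, hu]
    rw [pow_succ]
    field_simp
  have e1 : ∀ x : ℝ, x ^ (-6 : ℤ) = (x ^ (5 + 1))⁻¹ := fun x => by
    rw [zpow_neg]; norm_cast
  have e2 : ∀ x : ℝ, x ^ (-8 : ℤ) = (x ^ (7 + 1))⁻¹ := fun x => by
    rw [zpow_neg]; norm_cast
  have hb := aux_base e h0 h1
  have r0 := aux_rec e h0 h1 0
  have r1 := aux_rec e h0 h1 1
  have r2 := aux_rec e h0 h1 2
  have r3 := aux_rec e h0 h1 3
  have r4 := aux_rec e h0 h1 4
  have r5 := aux_rec e h0 h1 5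
  norm_num only at r0 r1 r2 r3 r4 r5
  have hpow : (1 - e ^ 2) ^ ((9 : ℝ) / 2) = √(1 - e ^ 2) ^ 9 := by
    rw [sqrt_eq_rpow, ← rpow_natCast (_ ^ (1 / 2 : ℝ)) 9, ← rpow_mul hs0.le]; norm_num
  have hfin : (∫ u in (0 : ℝ)..(2 * π), ((1 - e * cos u) ^ 5)⁻¹) * √(1 - e ^ 2) ^ 9
        = 2 * π * (1 + 3 * e ^ 2 + (3 / 8) * e ^ 4) ∧
      (∫ u in (0 : ℝ)..(2 * π), ((1 - e * cos u) ^ 7)⁻¹) * √(1 - e ^ 2) ^ 13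
        = 2 * π * (1 + (15 / 2) * e ^ 2 + (45 / 8) * e ^ 4 + (5 / 16) * e ^ 6) := by
    have hE : e ^ 2 = 1 - √(1 - e ^ 2) ^ 2 := by rw [hr2]; ring
    have hE4 : e ^ 4 = (1 - √(1 - e ^ 2) ^ 2) ^ 2 := by rw [hr2]; ring
    have hE6 : e ^ 6 = (1 - √(1 - e ^ 2) ^ 2) ^ 3 := by rw [hr2]; ring
    rw [← hr2] at r0 r1 r2 r3 r4 r5
    generalize (∫ u in (0 : ℝ)..(2 * π), ((1 - e * cos u) ^ 1)⁻¹) = J1 at *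
    generalize (∫ u in (0 : ℝ)..(2 * π), ((1 - e * cos u) ^ 2)⁻¹) = J2 at *
    generalize (∫ u in (0 : ℝ)..(2 * π), ((1 - e * cos u) ^ 3)⁻¹) = J3 at *
    generalize (∫ u in (0 : ℝ)..(2 * π), ((1 - e * cos u) ^ 4)⁻¹) = J4 at *
    generalize (∫ u in (0 : ℝ)..(2 * π), ((1 - e * cos u) ^ 5)⁻¹) = J5 at *
    generalize (∫ u in (0 : ℝ)..(2 * π), ((1 - e * cos u) ^ 6)⁻¹) = J6 at *
    generalize (∫ u in (0 : ℝ)..(2 * π), ((1 - e * cos u) ^ 7)⁻¹) = J7 at *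
    generalize √(1 - e ^ 2) = r at *
    rw [hE4, hE6, hE]
    have k2 : J2 * r ^ 3 = 2 * π := by linear_combination r * r0 + hb
    have k3 : J3 * r ^ 5 = π * (3 - r ^ 2) := by
      linear_combination (1 / 2) * (r ^ 3 * r1 + 3 * k2 - r ^ 2 * hb)
    have k4 : J4 * r ^ 7 = π * (5 - 3 * r ^ 2) := by
      linear_combination (1 / 3) * (r ^ 5 * r2 + 5 * k3 - 2 * r ^ 2 * k2)
    have k5 : J5 * r ^ 9 = π * (35 - 30 * r ^ 2 + 3 * r ^ 4) / 4 := by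
      linear_combination (1 / 4) * (r ^ 7 * r3 + 7 * k4 - 3 * r ^ 2 * k3)
    have k6 : J6 * r ^ 11 = π * (63 - 70 * r ^ 2 + 15 * r ^ 4) / 4 := by
      linear_combination (1 / 5) * (r ^ 9 * r4 + 9 * k5 - 4 * r ^ 2 * k4)
    constructor
    · rw [k5]; ring
    · linear_combination (1 / 6) * (r ^ 11 * r5 + 11 * k6 - 5 * r ^ 2 * k5)
  have A : ∫ t in (0 : ℝ)..(2 * π), (1 - e * Real.cos (uinv t)) ^ (-6 : ℤ) = 2 * π * Lbar e := by
    simp only [e1, hsub, Lbar, hpow]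
    rw [← mul_div_assoc, eq_div_iff (by positivity), hfin.1]
  refine ⟨A, ?_, fun μ => ?_⟩
  · simp only [e2, intervalIntegral.integral_const_mul, hsub, Nbar]
    rw [← mul_div_assoc, eq_div_iff (by positivity), ← hfin.2]
    nth_rewrite 2 [← hr2]
    ring
  · rw [A]; congr 1; ring
end
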